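/- arXiv:1111.2138 — 2 statements merged into one kernel-verified Lean document; each statement's English description precedes it below -/
import Mathlib

section
/- Let T be a weakly irreducible nonnegative tensor of order m ≥ 2 and dimension n ≥ 2, and let (λ*, x*) be a positive eigenpair of T (x* has all components positive and (T (x*)^{m-1})_i = λ* (x*)_i^{m-1} for all i). Then every eigenvalue ν ∈ ℂ of T (i.e., every ν for which there is v ∈ ℂ^n \ {0} with (T v^{m-1})_i = ν v_i^{m-1} for all i) satisfies |ν| ≤ λ*; in particular ρ(T) = λ*. -/
open Finset

/-- `(T x^{m-1})_i` for an order-`(k+1)` tensor encoded by its first index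
and the `k` trailing indices (so for an order-`m` tensor, `k = m - 1`). -/
def tapp {ι : Type*} [Fintype ι] {k : ℕ} (T : ι → (Fin k → ι) → ℝ) (x : ι → ℝ) (i : ι) : ℝ :=
  ∑ β : Fin k → ι, T i β * ∏ l, x (β l)

/-- All entries of the tensor are nonnegative. -/
def TNonneg {ι : Type*} {k : ℕ} (T : ι → (Fin k → ι) → ℝ) : Prop :=
  ∀ i β, 0 ≤ T i β

/-- `T` is strictly nonnegative: nonnegative, and `T x^{m-1} > 0` whenever `x > 0`. -/
def TStrictlyNonneg {ι : Type*} [Fintype ι] {k : ℕ} (T : ι → (Fin k → ι) → ℝ) : Prop :=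
  TNonneg T ∧ ∀ x : ι → ℝ, (∀ i, 0 < x i) → ∀ i, 0 < tapp T x i

/-- Representation matrix `G(T)`: `G(T)_{ij}` is the sum of all `T_{i i₂…i_m}` with
`j ∈ {i₂,…,i_m}`. -/
def repMat {ι : Type*} [Fintype ι] [DecidableEq ι] {k : ℕ}
    (T : ι → (Fin k → ι) → ℝ) : Matrix ι ι ℝ :=
  fun i j => ∑ β : Fin k → ι, if ∃ l, β l = j then T i β else 0

/-- Majorization matrix `M(T)`: `M(T)_{ij} = T_{i j j … j}`. -/
def majMat {ι : Type*} {k : ℕ} (T : ι → (Fin k → ι) → ℝ) : Matrix ι ι ℝ :=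
  fun i j => T i (fun _ => j)

/-- A square matrix is reducible if some nonempty proper index subset `I` satisfies
`A i j = 0` for all `i ∈ I`, `j ∉ I`. -/
def MatReducible {ι : Type*} [Fintype ι] (A : Matrix ι ι ℝ) : Prop :=
  ∃ I : Finset ι, I.Nonempty ∧ I ≠ Finset.univ ∧ ∀ i ∈ I, ∀ j ∉ I, A i j = 0

def MatIrreducible {ι : Type*} [Fintype ι] (A : Matrix ι ι ℝ) : Prop :=
  ¬ MatReducible A

/-- A square nonnegative matrix is primitive if some positive power is entrywise positive. -/
def MatPrimitive {ι : Type*} [Fintype ι] [DecidableEq ι] (A : Matrix ι ι ℝ) : Prop :=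
  ∃ p : ℕ, 0 < p ∧ ∀ i j, 0 < (A ^ p) i j

/-- `lam ∈ ℂ` is an eigenvalue of `T`:
`(T x^{m-1})_i = lam * x_i^{m-1}` for some nonzero `x ∈ ℂⁿ`. -/
def TIsEig {ι : Type*} [Fintype ι] {k : ℕ} (T : ι → (Fin k → ι) → ℝ) (lam : ℂ) : Prop :=
  ∃ x : ι → ℂ, x ≠ 0 ∧
    ∀ i, (∑ β : Fin k → ι, (T i β : ℂ) * ∏ l, x (β l)) = lam * x i ^ k

/-- Spectral radius: the supremum of moduli of eigenvalues. -/
noncomputable def specRad {ι : Type*} [Fintype ι] {k : ℕ}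
    (T : ι → (Fin k → ι) → ℝ) : ℝ :=
  sSup {r : ℝ | ∃ lam : ℂ, TIsEig T lam ∧ r = ‖lam‖}

/-- Induced tensor `T_I` on a subset `I` of the index set. -/
def inducedT {ι : Type*} {k : ℕ} (T : ι → (Fin k → ι) → ℝ) (I : Finset ι) :
    {i // i ∈ I} → (Fin k → {i // i ∈ I}) → ℝ :=
  fun i β => T i.val (fun l => (β l).val)

/-- The identity tensor: `E_{i₁…i_m} = 1` if all indices coincide, `0` otherwise. -/
def idT (ι : Type*) [DecidableEq ι] (k : ℕ) : ι → (Fin k → ι) → ℝ :=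
  fun i β => if ∀ l, β l = i then 1 else 0

/-- A tensor is reducible if some nonempty proper index subset `I` satisfies
`T_{i₁ i₂ … i_m} = 0` for all `i₁ ∈ I` and `i₂, …, i_m ∉ I`. -/
def TReducible {ι : Type*} [Fintype ι] {k : ℕ} (T : ι → (Fin k → ι) → ℝ) : Prop :=
  ∃ I : Finset ι, I.Nonempty ∧ I ≠ Finset.univ ∧
    ∀ i ∈ I, ∀ β : Fin k → ι, (∀ l, β l ∉ I) → T i β = 0

/-- The map `F_T(x)_i = ((T x^{m-1})_i)^{1/(m-1)}` (here `k = m - 1`). -/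
noncomputable def FT {ι : Type*} [Fintype ι] {k : ℕ}
    (T : ι → (Fin k → ι) → ℝ) (x : ι → ℝ) : ι → ℝ :=
  fun i => (tapp T x i) ^ ((k : ℝ)⁻¹)

/-- A tensor is primitive if some iterate of `F_T` is entrywise positive on every
nonzero nonnegative vector. -/
def TPrimitive {ι : Type*} [Fintype ι] {k : ℕ} (T : ι → (Fin k → ι) → ℝ) : Prop :=
  ∃ p : ℕ, 0 < p ∧ ∀ x : ι → ℝ, (∀ i, 0 ≤ x i) → x ≠ 0 → ∀ i, 0 < (FT T)^[p] x i

/-- `T` is weakly positive: all off-diagonal entries of `M(T)` are positive. -/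
def TWeaklyPositive {ι : Type*} {k : ℕ} (T : ι → (Fin k → ι) → ℝ) : Prop :=
  ∀ i j, i ≠ j → 0 < T i (fun _ => j)

/-- `T` is essentially positive: `T x^{m-1} > 0` for every nonzero `x ≥ 0`. -/
def TEssentiallyPositive {ι : Type*} [Fintype ι] {k : ℕ} (T : ι → (Fin k → ι) → ℝ) : Prop :=
  ∀ x : ι → ℝ, (∀ i, 0 ≤ x i) → x ≠ 0 → ∀ i, 0 < tapp T x i

/-- Hilbert's projective metric between two positive vectors:
`d(u,v) = log (max_i v_i/u_i) - log (min_i v_i/u_i)`. -/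
noncomputable def hilbertD {n : ℕ} (hn : 0 < n) (u v : Fin n → ℝ) : ℝ :=
  Real.log ((Finset.univ : Finset (Fin n)).sup' ⟨⟨0, hn⟩, Finset.mem_univ _⟩
      (fun i => v i / u i)) -
  Real.log ((Finset.univ : Finset (Fin n)).inf' ⟨⟨0, hn⟩, Finset.mem_univ _⟩
      (fun i => v i / u i))

/-!
Let `x` be the positive eigenvector and `v` an eigenvector for `ν`. Scale `x` by the least `c` with
`|v| ≤ c x`, so that equality `|v i| = c x i` holds at some index `i`. At this index, the triangle
inequality, monotonicity and homogeneity of `T` give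
`|ν| |v i| ^ (m - 1) ≤ (T |v| ^ (m - 1)) i ≤ c ^ (m - 1) (T x ^ (m - 1)) i = λ |v i| ^ (m - 1)`.
-/

theorem exists_forall_norm_le_mul_and_eq {ι E : Type*} [Finite ι] [NormedAddCommGroup E]
    {x : ι → ℝ} (hx : ∀ i, 0 < x i) {v : ι → E} (hv : v ≠ 0) :
    ∃ c > 0, (∀ j, ‖v j‖ ≤ c * x j) ∧ ∃ i, ‖v i‖ = c * x i := by
  obtain ⟨j, hj⟩ := Function.ne_iff.1 hv
  have : Nonempty ι := ⟨j⟩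
  obtain ⟨i, hi⟩ := Finite.exists_max fun i => ‖v i‖ / x i
  have hratio : 0 < ‖v j‖ / x j := div_pos (norm_pos_iff.2 hj) (hx j)
  exact ⟨‖v i‖ / x i, hratio.trans_le (hi j), fun l => (div_le_iff₀ (hx l)).1 (hi l),
    i, (div_mul_cancel₀ _ (hx i).ne').symm⟩

section Tensor

variable {ι : Type*} [Fintype ι] {k : ℕ} {T : ι → (Fin k → ι) → ℝ}

theorem tapp_smul (T : ι → (Fin k → ι) → ℝ) (c : ℝ) (x : ι → ℝ) (i : ι) :
    tapp T (c • x) i = c ^ k * tapp T x i := by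
  simp [tapp, prod_mul_distrib, mul_sum, mul_left_comm]

theorem TNonneg.tapp_mono (hT : TNonneg T) {x y : ι → ℝ} (hx : ∀ i, 0 ≤ x i)
    (hxy : ∀ i, x i ≤ y i) (i : ι) : tapp T x i ≤ tapp T y i :=
  sum_le_sum fun β _ => mul_le_mul_of_nonneg_left
    (prod_le_prod (fun _ _ => hx _) fun _ _ => hxy _) (hT i β)

theorem TNonneg.norm_sum_mul_prod_le_tapp_norm (hT : TNonneg T) (v : ι → ℂ) (i : ι) :
    ‖∑ β : Fin k → ι, (T i β : ℂ) * ∏ l, v (β l)‖ ≤ tapp T (fun j => ‖v j‖) i :=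
  norm_sum_le_of_le _ fun β _ => by
    rw [norm_mul, norm_prod, Complex.norm_of_nonneg (hT i β)]

theorem TIsEig.norm_le_of_tapp_le {nu : ℂ} (hnu : TIsEig T nu) (hT : TNonneg T)
    {x : ι → ℝ} (hx : ∀ i, 0 < x i) {mu : ℝ} (hmu : ∀ i, tapp T x i ≤ mu * x i ^ k) :
    ‖nu‖ ≤ mu := by
  obtain ⟨v, hv, hev⟩ := hnu
  obtain ⟨c, hc, hle, i, hi⟩ := exists_forall_norm_le_mul_and_eq hx hv
  have hvi : 0 < ‖v i‖ := hi ▸ mul_pos hc (hx i)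
  refine le_of_mul_le_mul_right ?_ (pow_pos hvi k)
  calc ‖nu‖ * ‖v i‖ ^ k = ‖∑ β : Fin k → ι, (T i β : ℂ) * ∏ l, v (β l)‖ := by
        rw [hev, norm_mul, norm_pow]
    _ ≤ tapp T (fun j => ‖v j‖) i := hT.norm_sum_mul_prod_le_tapp_norm v i
    _ ≤ tapp T (c • x) i := hT.tapp_mono (fun _ => norm_nonneg _) hle i
    _ = c ^ k * tapp T x i := tapp_smul T c x i
    _ ≤ c ^ k * (mu * x i ^ k) := mul_le_mul_of_nonneg_left (hmu i) (pow_nonneg hc.le k)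
    _ = mu * ‖v i‖ ^ k := by rw [hi, mul_pow, mul_left_comm]

theorem tIsEig_ofReal_of_tapp_eq {lam : ℝ} {x : ι → ℝ} (hx : x ≠ 0)
    (heig : ∀ i, tapp T x i = lam * x i ^ k) : TIsEig T (lam : ℂ) := by
  refine ⟨fun i => (x i : ℂ), fun h => hx ?_, fun i => ?_⟩
  · exact funext fun i => Complex.ofReal_eq_zero.1 (congrFun h i)
  · simpa [tapp] using congrArg Complex.ofReal (heig i)

theorem positive_eigenvalue_dominates_general [Nonempty ι] (hT : TNonneg T)
    {lam : ℝ} {x : ι → ℝ} (hx : ∀ i, 0 < x i) (heig : ∀ i, tapp T x i = lam * x i ^ k) :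
    (∀ nu : ℂ, TIsEig T nu → ‖nu‖ ≤ lam) ∧ specRad T = lam := by
  have hbound : ∀ nu : ℂ, TIsEig T nu → ‖nu‖ ≤ lam := fun _ hnu =>
    hnu.norm_le_of_tapp_le hT hx fun i => (heig i).le
  have hx0 : x ≠ 0 := Function.ne_iff.2 ⟨Classical.arbitrary ι, (hx _).ne'⟩
  have hlam : TIsEig T (lam : ℂ) := tIsEig_ofReal_of_tapp_eq hx0 heig
  have hnorm : lam = ‖(lam : ℂ)‖ :=
    le_antisymm ((Complex.norm_real lam).symm ▸ le_abs_self lam) (hbound _ hlam)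
  have hgreatest : IsGreatest {r : ℝ | ∃ nu : ℂ, TIsEig T nu ∧ r = ‖nu‖} lam :=
    ⟨⟨lam, hlam, hnorm⟩, fun _ ⟨nu, hnu, hr⟩ => hr.trans_le (hbound nu hnu)⟩
  exact ⟨hbound, hgreatest.csSup_eq⟩

end Tensor

theorem positive_eigenvalue_dominates
    (m n : ℕ) (hm : 2 ≤ m) (hn : 2 ≤ n)
    (T : Fin n → (Fin (m - 1) → Fin n) → ℝ) (hT : TNonneg T)
    (hwi : MatIrreducible (repMat T))
    (lam : ℝ) (xs : Fin n → ℝ) (hxs : ∀ i, 0 < xs i)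
    (heig : ∀ i, tapp T xs i = lam * xs i ^ (m - 1)) :
    (∀ nu : ℂ, TIsEig T nu → ‖nu‖ ≤ lam) ∧ specRad T = lam := by
  have : Nonempty (Fin n) := ⟨⟨0, by omega⟩⟩
  exact positive_eigenvalue_dominates_general hT hxs heig
end

section
/- Let T be a nonnegative tensor of order m ≥ 2 and dimension n ≥ 2. If T is reducible, then there exists an ordered partition {I_1,…,I_k} of {1,…,n} into pairwise disjoint nonempty sets whose union is {1,…,n} such that every induced tensor T_{I_j} is irreducible (one-dimensional induced tensors being regarded as irreducible by convention), and T_{s t_2 … t_m} = 0 for all s ∈ I_p and all t_2,…,t_m ∈ I_q whenever p > q. -/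
open Finset

/-!
If the tensor induced on a set `S` of indices is reducible, a witnessing set `I` splits `S` into
the smaller sets `S \ I` and `I`, and all entries with first index in `I` and trailing indices in
`S \ I` vanish. Refine both pieces recursively and list the blocks of `S \ I` before those of `I`.
The vanishing between the pieces passes to their blocks, and the recursion stops at irreducible
blocks.
-/

section BlockTriangularization

variable {ι : Type*} {k : ℕ} {T : ι → (Fin k → ι) → ℝ}

/-- The off-diagonal block `T_{I, J, …, J}` is zero: the vanishing condition that appears both in
reducibility and between the parts of a block triangular partition. -/
def VanishesOn (T : ι → (Fin k → ι) → ℝ) (I J : Finset ι) : Prop :=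
  ∀ i ∈ I, ∀ β : Fin k → ι, (∀ l, β l ∈ J) → T i β = 0

theorem VanishesOn.mono {I I' J J' : Finset ι} (h : VanishesOn T I J) (hI : I' ⊆ I)
    (hJ : J' ⊆ J) : VanishesOn T I' J' :=
  fun i hi β hβ => h i (hI hi) β fun l => hJ (hβ l)

theorem tReducible_inducedT_iff [DecidableEq ι] {S : Finset ι} :
    TReducible (inducedT T S) ↔ ∃ I ⊂ S, I.Nonempty ∧ VanishesOn T I (S \ I) := by
  constructor
  · rintro ⟨J, hJ, hJ_univ, hzero⟩
    have mem_map_iff (x : S) : x.1 ∈ J.map (.subtype _) ↔ x ∈ J :=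
      mem_map' (Function.Embedding.subtype _)
    obtain ⟨y, hy⟩ : ∃ y, y ∉ J := not_forall.1 (mt eq_univ_iff_forall.2 hJ_univ)
    refine ⟨J.map (.subtype _), ?_, hJ.map, fun i hi β hβ => ?_⟩
    · exact (ssubset_iff_of_subset (map_subtype_subset J)).2
        ⟨y, y.2, fun h => hy ((mem_map_iff y).1 h)⟩
    · have hβS (l : Fin k) : β l ∈ S := (mem_sdiff.1 (hβ l)).1
      have hiS : i ∈ S := map_subtype_subset J hi
      exact hzero ⟨i, hiS⟩ ((mem_map_iff _).1 hi) (fun l => ⟨β l, hβS l⟩)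
        fun l h => (mem_sdiff.1 (hβ l)).2 ((mem_map_iff _).2 h)
  · rintro ⟨I, hIS, ⟨x, hx⟩, hzero⟩
    obtain ⟨y, hyS, hyI⟩ := exists_of_ssubset hIS
    refine ⟨I.subtype (· ∈ S), ⟨⟨x, hIS.1 hx⟩, mem_subtype.2 hx⟩, fun h => hyI ?_,
      fun i hi β hβ => hzero i (mem_subtype.1 hi) _ fun l => ?_⟩
    · exact mem_subtype.1 (eq_univ_iff_forall.1 h ⟨y, hyS⟩)
    · exact mem_sdiff.2 ⟨(β l).2, fun h => hβ l (mem_subtype.2 h)⟩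

/-- The list `L` is an ordered partition of `S` into nonempty blocks which puts `T` in block
triangular form with irreducible diagonal blocks. A list makes refining a partition a matter of
concatenation, with the conditions on pairs of blocks expressed by `List.Pairwise`. -/
structure IsBlockTriangularization (T : ι → (Fin k → ι) → ℝ) (S : Finset ι)
    (L : List (Finset ι)) : Prop where
  nonempty : ∀ B ∈ L, B.Nonempty
  disjoint : L.Pairwise Disjoint
  mem_iff : ∀ x, x ∈ S ↔ ∃ B ∈ L, x ∈ B
  irreducible : ∀ B ∈ L, ¬ TReducible (inducedT T B)
  vanishesOn : L.Pairwise fun A B => VanishesOn T B A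

namespace IsBlockTriangularization

variable {S S' : Finset ι} {L L' : List (Finset ι)}

theorem subset (h : IsBlockTriangularization T S L) {B : Finset ι} (hB : B ∈ L) : B ⊆ S :=
  fun x hx => (h.mem_iff x).2 ⟨B, hB, hx⟩

theorem empty : IsBlockTriangularization T ∅ [] where
  nonempty := by simp
  disjoint := .nil
  mem_iff := by simp
  irreducible := by simp
  vanishesOn := .nil

theorem singleton (hS : S.Nonempty) (hirr : ¬ TReducible (inducedT T S)) :
    IsBlockTriangularization T S [S] where
  nonempty := by simpa
  disjoint := List.pairwise_singleton _ _
  mem_iff := by simp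
  irreducible := by simpa
  vanishesOn := List.pairwise_singleton _ _

theorem append [DecidableEq ι] (h : IsBlockTriangularization T S L)
    (h' : IsBlockTriangularization T S' L') (hdisj : Disjoint S S') (hzero : VanishesOn T S' S) :
    IsBlockTriangularization T (S ∪ S') (L ++ L') where
  nonempty := List.forall_mem_append.2 ⟨h.nonempty, h'.nonempty⟩
  disjoint := List.pairwise_append.2 ⟨h.disjoint, h'.disjoint,
    fun _ hA _ hB => disjoint_of_subset_left (h.subset hA)
      (disjoint_of_subset_right (h'.subset hB) hdisj)⟩
  mem_iff x := by
    simp only [mem_union, h.mem_iff, h'.mem_iff, List.mem_append, or_and_right, exists_or]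
  irreducible := List.forall_mem_append.2 ⟨h.irreducible, h'.irreducible⟩
  vanishesOn := List.pairwise_append.2 ⟨h.vanishesOn, h'.vanishesOn,
    fun _ hA _ hB => hzero.mono (h'.subset hB) (h.subset hA)⟩

theorem pairwise_disjoint_get (h : IsBlockTriangularization T S L) :
    Pairwise fun i j => Disjoint (L.get i) (L.get j) :=
  pairwise_disjoint_on L.get |>.2 fun _ _ => List.pairwise_iff_get.1 h.disjoint _ _

theorem biUnion_get [DecidableEq ι] (h : IsBlockTriangularization T S L) :
    univ.biUnion L.get = S := by
  ext x
  simp only [mem_biUnion, mem_univ, true_and, h.mem_iff, List.exists_mem_iff_get]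

end IsBlockTriangularization

theorem exists_isBlockTriangularization (T : ι → (Fin k → ι) → ℝ) (S : Finset ι) :
    ∃ L, IsBlockTriangularization T S L := by
  classical
  induction S using Finset.strongInduction with
  | H S ih =>
    obtain rfl | hS := S.eq_empty_or_nonempty
    · exact ⟨[], .empty⟩
    by_cases hred : TReducible (inducedT T S)
    · obtain ⟨I, hIS, hI, hzero⟩ := tReducible_inducedT_iff.1 hred
      obtain ⟨L, hL⟩ := ih (S \ I) (sdiff_ssubset hIS.1 hI)
      obtain ⟨L', hL'⟩ := ih I hIS
      have happend := hL.append hL' sdiff_disjoint hzero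
      rw [sdiff_union_of_subset hIS.1] at happend
      exact ⟨L ++ L', happend⟩
    · exact ⟨[S], .singleton hS hred⟩

end BlockTriangularization

theorem reducible_partition_into_irreducible_blocks_general {ι : Type*} [DecidableEq ι] {d : ℕ}
    (T : ι → (Fin d → ι) → ℝ) (S : Finset ι) :
    ∃ (k : ℕ) (P : Fin k → Finset ι),
      (∀ j, (P j).Nonempty) ∧
      (∀ j j', j ≠ j' → Disjoint (P j) (P j')) ∧
      univ.biUnion P = S ∧
      (∀ j, ¬ TReducible (inducedT T (P j))) ∧
      ∀ p q : Fin k, q < p → ∀ s ∈ P p,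
        ∀ β : Fin d → ι, (∀ l, β l ∈ P q) → T s β = 0 := by
  obtain ⟨L, hL⟩ := exists_isBlockTriangularization T S
  exact ⟨L.length, L.get, fun j => hL.nonempty _ (L.get_mem j), hL.pairwise_disjoint_get,
    hL.biUnion_get, fun j => hL.irreducible _ (L.get_mem j),
    fun p q hqp => List.pairwise_iff_get.1 hL.vanishesOn q p hqp⟩

theorem reducible_partition_into_irreducible_blocks
    (m n : ℕ) (hm : 2 ≤ m) (hn : 2 ≤ n)
    (T : Fin n → (Fin (m - 1) → Fin n) → ℝ) (hT : TNonneg T)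
    (hred : TReducible T) :
    ∃ (k : ℕ) (P : Fin k → Finset (Fin n)),
      (∀ j, (P j).Nonempty) ∧
      (∀ j j', j ≠ j' → Disjoint (P j) (P j')) ∧
      (Finset.univ.biUnion P = (Finset.univ : Finset (Fin n))) ∧
      (∀ j, ¬ TReducible (inducedT T (P j))) ∧
      ∀ p q : Fin k, q < p → ∀ s ∈ P p,
        ∀ β : Fin (m - 1) → Fin n, (∀ l, β l ∈ P q) → T s β = 0 :=
  reducible_partition_into_irreducible_blocks_general T univ
end
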